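/- Let Ω ⊆ ℝ² be open and let f : Ω → ℝ be a C^∞ function satisfying the zero mean curvature equation (1 − f_y²) f_xx + 2 f_x f_y f_xy + (1 − f_x²) f_yy = 0 on Ω. Set B := 1 − f_x² − f_y², and let p ∈ Ω be a non-degenerate point of type change, i.e. B(p) = 0 and ∇B(p) ≠ 0. Then there exist ε > 0 and a C^∞ curve σ = (x, y) : (−ε, ε) → Ω with σ(0) = p such that for all t: x'(t)² + y'(t)² = 1, f(σ(t)) = f(p) + t, B(σ(t)) = 0, (x'(t), y'(t)) = (f_x(σ(t)), f_y(σ(t))), and (x''(0), y''(0)) ≠ (0,0). Consequently t ↦ (f(p)+t, x(t), y(t)) is a null curve in ℝ³₁ lying in the graph of f whose acceleration at t = 0 is not proportional to its velocity (a non-degenerate null curve). -/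

import Mathlib

/-!
The curve is the integral curve `σ` of the gradient field `∇f` through `p`.

Differentiating `B = 1 - f_x² - f_y²` gives
`⟨∇f, ∇B⟩ = -2 (f_x² f_xx + 2 f_x f_y f_xy + f_y² f_yy)`, while the zero mean curvature equation
reads `B Δf + (f_x² f_xx + 2 f_x f_y f_xy + f_y² f_yy) = 0`.  Hence `⟨∇f, ∇B⟩ = 2 Δf · B`
(`zmc_transport`), so `B ∘ σ` solves a homogeneous linear ODE with initial value `B(p) = 0` and
vanishes identically by uniqueness (`linear_ode_eventually_zero`).  Consequently
`|σ'|² = |∇f|² = 1 - B = 1` and `(f ∘ σ)' = |∇f|² = 1`, so that `f (σ t) = f p + t`.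
Finally `σ'' = Hess f · ∇f = -½ ∇B`, which is nonzero at `p` by assumption.  The space curve
`(f p + t, σ t)` has first velocity component `1` and first acceleration component `0`, so
acceleration proportional to velocity would force `σ''(0) = 0`.  Smoothness of `σ` follows by
bootstrapping `σ' = ∇f ∘ σ` (`integralCurve_contDiffOn`).
-/

open Set

/-- Partial derivative in the first (x) direction. -/
noncomputable def pd1 {E : Type*} [NormedAddCommGroup E] [NormedSpace ℝ E]
    (f : ℝ × ℝ → E) (q : ℝ × ℝ) : E := fderiv ℝ f q (1, 0)

/-- Partial derivative in the second (y) direction. -/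
noncomputable def pd2 {E : Type*} [NormedAddCommGroup E] [NormedSpace ℝ E]
    (f : ℝ × ℝ → E) (q : ℝ × ℝ) : E := fderiv ℝ f q (0, 1)

/-- B = 1 - f_x^2 - f_y^2. -/
noncomputable def Bfun (f : ℝ × ℝ → ℝ) (q : ℝ × ℝ) : ℝ :=
  1 - (pd1 f q) ^ 2 - (pd2 f q) ^ 2

/-- The zero mean curvature equation at a point. -/
def ZMCAt (f : ℝ × ℝ → ℝ) (q : ℝ × ℝ) : Prop :=
  (1 - (pd2 f q) ^ 2) * pd1 (pd1 f) q
    + 2 * pd1 f q * pd2 f q * pd2 (pd1 f) q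
    + (1 - (pd1 f q) ^ 2) * pd2 (pd2 f) q = 0

/-- The Lorentz inner product of ℝ³₁: ⟨(t,x,y),(t',x',y')⟩ = -tt' + xx' + yy'. -/
def lprod (a b : ℝ × ℝ × ℝ) : ℝ :=
  -(a.1 * b.1) + a.2.1 * b.2.1 + a.2.2 * b.2.2

open Filter Topology

lemma clm_prod_apply (L : ℝ × ℝ →L[ℝ] ℝ) (a b : ℝ) :
    L (a, b) = a * L (1, 0) + b * L (0, 1) := by
  have h : ((a, b) : ℝ × ℝ) = a • ((1 : ℝ), (0 : ℝ)) + b • ((0 : ℝ), (1 : ℝ)) := by simp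
  rw [h, map_add, map_smul, map_smul]
  simp

section PartialDerivatives

variable {Ω : Set (ℝ × ℝ)} {f : ℝ × ℝ → ℝ}

lemma contDiffOn_pd1 (hΩ : IsOpen Ω) (hf : ContDiffOn ℝ (⊤ : ℕ∞) f Ω) :
    ContDiffOn ℝ (⊤ : ℕ∞) (pd1 f) Ω :=
  (((contDiffOn_infty_iff_fderiv_of_isOpen hΩ).1 hf).2).clm_apply contDiffOn_const

lemma contDiffOn_pd2 (hΩ : IsOpen Ω) (hf : ContDiffOn ℝ (⊤ : ℕ∞) f Ω) :
    ContDiffOn ℝ (⊤ : ℕ∞) (pd2 f) Ω :=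
  (((contDiffOn_infty_iff_fderiv_of_isOpen hΩ).1 hf).2).clm_apply contDiffOn_const

lemma contDiffOn_differentiableAt (hΩ : IsOpen Ω) (hf : ContDiffOn ℝ (⊤ : ℕ∞) f Ω)
    {q : ℝ × ℝ} (hq : q ∈ Ω) : DifferentiableAt ℝ f q :=
  (hf.contDiffAt (hΩ.mem_nhds hq)).differentiableAt (by simp)

lemma pd1_pd2_comm (hΩ : IsOpen Ω) (hf : ContDiffOn ℝ (⊤ : ℕ∞) f Ω)
    {q : ℝ × ℝ} (hq : q ∈ Ω) : pd1 (pd2 f) q = pd2 (pd1 f) q := by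
  have hd : DifferentiableAt ℝ (fderiv ℝ f) q :=
    ((((contDiffOn_infty_iff_fderiv_of_isOpen hΩ).1 hf).2).contDiffAt
      (hΩ.mem_nhds hq)).differentiableAt (by simp)
  have key : ∀ v w : ℝ × ℝ,
      fderiv ℝ (fun z => fderiv ℝ f z v) q w = fderiv ℝ (fderiv ℝ f) q w v := by
    intro v w
    rw [fderiv_clm_apply hd (differentiableAt_const v)]
    simp
  have hs : IsSymmSndFDerivAt ℝ f q :=
    (hf.contDiffAt (hΩ.mem_nhds hq)).isSymmSndFDerivAt (by
      simpa using WithTop.coe_le_coe.2 (le_top : (2 : ℕ∞) ≤ ⊤))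
  have h1 := key (0, 1) (1, 0)
  have h2 := key (1, 0) (0, 1)
  exact h1.trans ((hs (1, 0) (0, 1)).trans h2.symm)

lemma fderiv_Bfun (hΩ : IsOpen Ω) (hf : ContDiffOn ℝ (⊤ : ℕ∞) f Ω)
    {q : ℝ × ℝ} (hq : q ∈ Ω) (v : ℝ × ℝ) :
    fderiv ℝ (Bfun f) q v =
      -2 * (pd1 f q * fderiv ℝ (pd1 f) q v + pd2 f q * fderiv ℝ (pd2 f) q v) := by
  have h1 := (contDiffOn_differentiableAt hΩ (contDiffOn_pd1 hΩ hf) hq).hasFDerivAt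
  have h2 := (contDiffOn_differentiableAt hΩ (contDiffOn_pd2 hΩ hf) hq).hasFDerivAt
  have h : HasFDerivAt (Bfun f) _ q := ((h1.pow 2).const_sub 1).sub (h2.pow 2)
  rw [h.fderiv]
  simp
  ring

/-- Along `∇f` the function `B` satisfies a homogeneous linear equation: `⟨∇f, ∇B⟩ = 2 Δf · B`. -/
lemma zmc_transport (hΩ : IsOpen Ω) (hf : ContDiffOn ℝ (⊤ : ℕ∞) f Ω)
    {q : ℝ × ℝ} (hq : q ∈ Ω) (hz : ZMCAt f q) :
    pd1 f q * pd1 (Bfun f) q + pd2 f q * pd2 (Bfun f) q =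
      2 * (pd1 (pd1 f) q + pd2 (pd2 f) q) * Bfun f q := by
  have h1 : pd1 (Bfun f) q =
      -2 * (pd1 f q * pd1 (pd1 f) q + pd2 f q * pd1 (pd2 f) q) := fderiv_Bfun hΩ hf hq _
  have h2 : pd2 (Bfun f) q =
      -2 * (pd1 f q * pd2 (pd1 f) q + pd2 f q * pd2 (pd2 f) q) := fderiv_Bfun hΩ hf hq _
  rw [pd1_pd2_comm hΩ hf hq] at h1
  unfold ZMCAt at hz
  rw [h1, h2, Bfun]
  linear_combination -2 * hz

end PartialDerivatives

lemma hasDerivAt_comp_curve {g : ℝ × ℝ → ℝ} {σ : ℝ → ℝ × ℝ} {t a b : ℝ}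
    (hg : DifferentiableAt ℝ g (σ t)) (hσ : HasDerivAt σ (a, b) t) :
    HasDerivAt (fun s => g (σ s)) (a * pd1 g (σ t) + b * pd2 g (σ t)) t := by
  have h := hg.hasFDerivAt.comp_hasDerivAt t hσ
  rwa [clm_prod_apply] at h

/-- A solution of `g' = h g` with `g(0) = 0` vanishes near `0`, for `h` continuous at `0`. -/
lemma linear_ode_eventually_zero {g h : ℝ → ℝ} (hh : ContinuousAt h 0)
    (hg : ∀ᶠ t in 𝓝 0, HasDerivAt g (h t * g t) t) (h0 : g 0 = 0) :
    ∀ᶠ t in 𝓝 0, g t = 0 := by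
  -- continuity bounds `|h|` near `0`, which is the Lipschitz constant needed for uniqueness
  have hb : ∀ᶠ t in 𝓝 0, ‖h t‖₊ < ‖h 0‖₊ + 1 :=
    hh.nnnorm.eventually_lt_const (by simp)
  refine ODE_solution_unique_of_eventually (v := fun t z => h t * z) (s := fun _ => univ)
    (K := ‖h 0‖₊ + 1) (g := fun _ => 0) ?_ ?_ ?_ h0
  · filter_upwards [hb] with t ht
    refine (LipschitzWith.of_dist_le_mul fun z w => ?_).lipschitzOnWith
    rw [Real.dist_eq, Real.dist_eq, ← mul_sub, abs_mul]
    refine mul_le_mul_of_nonneg_right ?_ (abs_nonneg _)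
    exact_mod_cast ht.le
  · filter_upwards [hg] with t ht using ⟨ht, mem_univ _⟩
  · refine Eventually.of_forall fun t => ⟨?_, mem_univ _⟩
    simpa using hasDerivAt_const t (0 : ℝ)

/-- Integral curves of a smooth vector field are smooth. -/
lemma integralCurve_contDiffOn {Ω : Set (ℝ × ℝ)} {V : ℝ × ℝ → ℝ × ℝ} {σ : ℝ → ℝ × ℝ} {I : Set ℝ}
    (hI : IsOpen I) (hV : ContDiffOn ℝ (⊤ : ℕ∞) V Ω) (hmem : ∀ t ∈ I, σ t ∈ Ω)
    (hσ : ∀ t ∈ I, HasDerivAt σ (V (σ t)) t) : ContDiffOn ℝ (⊤ : ℕ∞) σ I := by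
  rw [contDiffOn_infty]
  intro n
  induction n with
  | zero =>
    exact contDiffOn_zero.2 fun t ht => (hσ t ht).continuousAt.continuousWithinAt
  | succ n ih =>
    push_cast
    rw [contDiffOn_succ_iff_deriv_of_isOpen hI]
    refine ⟨fun t ht => (hσ t ht).differentiableAt.differentiableWithinAt, by simp, ?_⟩
    have h : ContDiffOn ℝ n (V ∘ σ) I := (contDiffOn_infty.1 hV n).comp ih hmem
    exact h.congr fun t ht => (hσ t ht).deriv

/-- through any non-degenerate point of type change of a smooth solution of
    the ZMC equation there passes a smooth unit-speed curve σ = (x,y) with σ(0) = p,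
    f(σ(t)) = f(p) + t, B(σ(t)) = 0, σ' = ∇f ∘ σ and σ''(0) ≠ 0; consequently
    t ↦ (f(p)+t, x(t), y(t)) is a non-degenerate null curve in the graph of f. -/
theorem stmt2 (Ω : Set (ℝ × ℝ)) (hΩ : IsOpen Ω) (f : ℝ × ℝ → ℝ)
    (hf : ContDiffOn ℝ (⊤ : ℕ∞) f Ω)
    (hzmc : ∀ q ∈ Ω, ZMCAt f q)
    (p : ℝ × ℝ) (hp : p ∈ Ω)
    (hB : Bfun f p = 0)
    (hgrad : (pd1 (Bfun f) p, pd2 (Bfun f) p) ≠ (0, 0)) :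
    ∃ ε > 0, ∃ x y : ℝ → ℝ,
      ContDiffOn ℝ (⊤ : ℕ∞) x (Ioo (-ε) ε) ∧ ContDiffOn ℝ (⊤ : ℕ∞) y (Ioo (-ε) ε) ∧
      (x 0, y 0) = p ∧
      (∀ t ∈ Ioo (-ε) ε,
        (x t, y t) ∈ Ω ∧
        (deriv x t) ^ 2 + (deriv y t) ^ 2 = 1 ∧
        f (x t, y t) = f p + t ∧
        Bfun f (x t, y t) = 0 ∧
        deriv x t = pd1 f (x t, y t) ∧
        deriv y t = pd2 f (x t, y t)) ∧
      (deriv (deriv x) 0, deriv (deriv y) 0) ≠ (0, 0) ∧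
      (∀ t ∈ Ioo (-ε) ε,
        lprod (deriv (fun s => (f p + s, x s, y s)) t)
              (deriv (fun s => (f p + s, x s, y s)) t) = 0 ∧
        deriv (fun s => (f p + s, x s, y s)) t ≠ 0) ∧
      ¬ ∃ c : ℝ, deriv (deriv (fun s => (f p + s, x s, y s))) 0
          = c • deriv (fun s => (f p + s, x s, y s)) 0 := by
  have hu := contDiffOn_pd1 hΩ hf
  have hw := contDiffOn_pd2 hΩ hf
  have hV : ContDiffOn ℝ (⊤ : ℕ∞) (fun q => (pd1 f q, pd2 f q)) Ω := hu.prodMk hw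
  have hBs : ContDiffOn ℝ (⊤ : ℕ∞) (Bfun f) Ω := (contDiffOn_const.sub (hu.pow 2)).sub (hw.pow 2)
  obtain ⟨σ, hσ0, δ, hδ, hσδ⟩ :=
    ((hV.contDiffAt (hΩ.mem_nhds hp)).of_le (by exact_mod_cast le_top)
      ).exists_forall_mem_closedBall_exists_eq_forall_mem_Ioo_hasDerivAt₀ 0
  have hσ : ∀ᶠ t in 𝓝 (0 : ℝ), HasDerivAt σ (pd1 f (σ t), pd2 f (σ t)) t := by
    filter_upwards [Ioo_mem_nhds (show 0 - δ < 0 by linarith) (show 0 < 0 + δ by linarith)]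
      with t ht using hσδ t ht
  have hσc : ContinuousAt σ 0 := hσ.self_of_nhds.continuousAt
  have hσΩ : ∀ᶠ t in 𝓝 (0 : ℝ), σ t ∈ Ω :=
    hσc.eventually_mem (by rw [hσ0]; exact hΩ.mem_nhds hp)
  have hBσ : ∀ᶠ t in 𝓝 (0 : ℝ), Bfun f (σ t) = 0 := by
    refine linear_ode_eventually_zero
      (h := fun t => 2 * (pd1 (pd1 f) (σ t) + pd2 (pd2 f) (σ t))) ?_ ?_ (by rw [hσ0, hB])
    · have hΔ : ContinuousAt (fun q => 2 * (pd1 (pd1 f) q + pd2 (pd2 f) q)) (σ 0) := by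
        rw [hσ0]
        exact (continuousOn_const.mul ((contDiffOn_pd1 hΩ hu).continuousOn.add
          (contDiffOn_pd2 hΩ hw).continuousOn)).continuousAt (hΩ.mem_nhds hp)
      exact hΔ.tendsto.comp hσc
    · filter_upwards [hσ, hσΩ] with t ht htΩ
      rw [← zmc_transport hΩ hf htΩ (hzmc _ htΩ)]
      exact hasDerivAt_comp_curve (contDiffOn_differentiableAt hΩ hBs htΩ) ht
  have hunit : ∀ᶠ t in 𝓝 (0 : ℝ), pd1 f (σ t) ^ 2 + pd2 f (σ t) ^ 2 = 1 := by
    filter_upwards [hBσ] with t ht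
    unfold Bfun at ht
    linarith
  have hfσ : ∀ᶠ t in 𝓝 (0 : ℝ), f (σ t) = f p + t := by
    -- both sides solve `z' = 1` with the same initial value
    refine ODE_solution_unique_of_eventually (v := fun _ _ => (1 : ℝ)) (s := fun _ => univ)
      (K := 0) ?_ ?_ ?_ (by simp [hσ0])
    · exact Eventually.of_forall fun t => (LipschitzWith.const (1 : ℝ)).lipschitzOnWith
    · filter_upwards [hσ, hσΩ, hunit] with t ht htΩ h1
      refine ⟨?_, mem_univ _⟩
      have h := hasDerivAt_comp_curve (contDiffOn_differentiableAt hΩ hf htΩ) ht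
      rwa [← pow_two, ← pow_two, h1] at h
    · exact Eventually.of_forall fun t => ⟨(hasDerivAt_id t).const_add (f p), mem_univ _⟩
  obtain ⟨ε, hε, hall⟩ := Metric.eventually_nhds_iff_ball.1
    (hσ.and (hσΩ.and (hBσ.and (hunit.and hfσ))))
  simp only [Real.ball_eq_Ioo, zero_sub, zero_add] at hall
  have hsm : ContDiffOn ℝ (⊤ : ℕ∞) σ (Ioo (-ε) ε) :=
    integralCurve_contDiffOn isOpen_Ioo hV (fun t ht => (hall t ht).2.1) fun t ht => (hall t ht).1
  have hx : ∀ t ∈ Ioo (-ε) ε, HasDerivAt (fun s => (σ s).1) (pd1 f (σ t)) t :=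
    fun t ht => (hall t ht).1.fst
  have hy : ∀ t ∈ Ioo (-ε) ε, HasDerivAt (fun s => (σ s).2) (pd2 f (σ t)) t :=
    fun t ht => (hall t ht).1.snd
  have hγ : ∀ t ∈ Ioo (-ε) ε, HasDerivAt (fun s => (f p + s, (σ s).1, (σ s).2))
      ((1 : ℝ), pd1 f (σ t), pd2 f (σ t)) t := fun t ht =>
    ((hasDerivAt_id t).const_add (f p)).prodMk ((hx t ht).prodMk (hy t ht))
  have h0 : (0 : ℝ) ∈ Ioo (-ε) ε := ⟨by linarith, hε⟩
  have hI : Ioo (-ε) ε ∈ 𝓝 (0 : ℝ) := isOpen_Ioo.mem_nhds h0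
  -- the second derivatives at `0`
  have hvel : HasDerivAt σ (pd1 f p, pd2 f p) 0 := by simpa [hσ0] using (hall 0 h0).1
  have hxx : HasDerivAt (fun s => pd1 f (σ s))
      (pd1 f p * pd1 (pd1 f) p + pd2 f p * pd2 (pd1 f) p) 0 := by
    simpa [hσ0] using hasDerivAt_comp_curve (g := pd1 f) (t := 0)
      (by rw [hσ0]; exact contDiffOn_differentiableAt hΩ hu hp) hvel
  have hyy : HasDerivAt (fun s => pd2 f (σ s))
      (pd1 f p * pd1 (pd2 f) p + pd2 f p * pd2 (pd2 f) p) 0 := by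
    simpa [hσ0] using hasDerivAt_comp_curve (g := pd2 f) (t := 0)
      (by rw [hσ0]; exact contDiffOn_differentiableAt hΩ hw hp) hvel
  -- `σ''(0) = -½ ∇B(p) ≠ 0`
  have hne : ¬ (pd1 f p * pd1 (pd1 f) p + pd2 f p * pd2 (pd1 f) p = 0 ∧
      pd1 f p * pd1 (pd2 f) p + pd2 f p * pd2 (pd2 f) p = 0) := by
    rintro ⟨e1, e2⟩
    have b1 : pd1 (Bfun f) p =
        -2 * (pd1 f p * pd1 (pd1 f) p + pd2 f p * pd1 (pd2 f) p) := fderiv_Bfun hΩ hf hp _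
    have b2 : pd2 (Bfun f) p =
        -2 * (pd1 f p * pd2 (pd1 f) p + pd2 f p * pd2 (pd2 f) p) := fderiv_Bfun hΩ hf hp _
    have hc := pd1_pd2_comm hΩ hf hp
    rw [hc] at b1 e2
    rw [e1] at b1
    rw [e2] at b2
    exact hgrad (by rw [b1, b2]; simp)
  have hdx : deriv (fun s => (σ s).1) =ᶠ[𝓝 0] fun s => pd1 f (σ s) := by
    filter_upwards [hI] with t ht using (hx t ht).deriv
  have hdy : deriv (fun s => (σ s).2) =ᶠ[𝓝 0] fun s => pd2 f (σ s) := by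
    filter_upwards [hI] with t ht using (hy t ht).deriv
  have hdγ : deriv (fun s => (f p + s, (σ s).1, (σ s).2)) =ᶠ[𝓝 0]
      fun s => ((1 : ℝ), pd1 f (σ s), pd2 f (σ s)) := by
    filter_upwards [hI] with t ht using (hγ t ht).deriv
  refine ⟨ε, hε, fun t => (σ t).1, fun t => (σ t).2, hsm.fst, hsm.snd, hσ0, ?_, ?_, ?_, ?_⟩
  · intro t ht
    obtain ⟨-, hΩt, hBt, h1, hft⟩ := hall t ht
    rw [(hx t ht).deriv, (hy t ht).deriv]
    exact ⟨hΩt, h1, hft, hBt, rfl, rfl⟩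
  · rw [hdx.deriv_eq, hdy.deriv_eq, hxx.deriv, hyy.deriv]
    intro h
    exact hne (Prod.mk.inj h)
  · intro t ht
    rw [(hγ t ht).deriv]
    refine ⟨?_, fun h => one_ne_zero (congrArg Prod.fst h)⟩
    have h1 := (hall t ht).2.2.2.1
    simp only [lprod]
    linarith
  · rintro ⟨c, hc⟩
    rw [hdγ.deriv_eq, ((hasDerivAt_const (0 : ℝ) (1 : ℝ)).prodMk (hxx.prodMk hyy)).deriv,
      (hγ 0 h0).deriv] at hc
    simp only [Prod.smul_mk, Prod.mk.injEq, smul_eq_mul, mul_one] at hc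
    obtain ⟨hc0, hc1, hc2⟩ := hc
    rw [← hc0, zero_mul] at hc1 hc2
    exact hne ⟨hc1, hc2⟩
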